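/- Let M be a finite, nonempty language over a single-letter alphabet {a} with M ≠ {ε}, and let n be any natural number strictly greater than the length of every word in M (for instance n = 1 + the maximal word length in M). Then there is no language L over {a} with L^n = M. -/

import Mathlib

/-!
If `L` contains a nonempty word `w`, then `L ^ n` contains the `n`-fold repetition of `w`, whose
length is at least `n`. So a power `L ^ n` with only words shorter than `n` forces `L ⊆ {ε}`,
and then `L ^ n ⊆ {ε}` as well.
-/

section LanguagePowers

variable {α : Type*} {L : Language α} {n : ℕ}

theorem flatten_replicate_mem_language_pow {w : List α} (hw : w ∈ L) (n : ℕ) :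
    (List.replicate n w).flatten ∈ L ^ n :=
  Language.mem_pow.mpr
    ⟨List.replicate n w, rfl, List.length_replicate, fun _ hv => List.eq_of_mem_replicate hv ▸ hw⟩

theorem language_le_one_of_forall_mem_pow_length_lt (hn : ∀ w ∈ L ^ n, w.length < n) : L ≤ 1 := by
  intro w hw
  by_contra hw_nil
  have hw_pos : 0 < w.length := List.length_pos_iff.mpr hw_nil
  have hlt : n * w.length < n := by
    simpa using hn _ (flatten_replicate_mem_language_pow hw n)
  exact hlt.not_ge (Nat.le_mul_of_pos_right n hw_pos)

theorem language_pow_eq_one_of_forall_length_lt (hne : (L ^ n).Nonempty)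
    (hn : ∀ w ∈ L ^ n, w.length < n) : L ^ n = 1 :=
  hne.subset_singleton_iff.mp (pow_le_one' (language_le_one_of_forall_mem_pow_length_lt hn) n)

end LanguagePowers

theorem no_power_root_of_finite_unary_language_general {α : Type*} {M : Language α}
    (hne : M.Nonempty) (hneq : M ≠ 1) {n : ℕ} (hn : ∀ w ∈ M, w.length < n) :
    ¬ ∃ L : Language α, L ^ n = M := by
  rintro ⟨L, rfl⟩
  exact hneq (language_pow_eq_one_of_forall_length_lt hne hn)

/-- Let `M` be a finite nonempty language over the single-letter alphabet `{a}`
with `M ≠ {ε}`, and let `n` exceed the length of every word in `M`.  Then there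
is no language `L` over `{a}` with `L ^ n = M`. -/
theorem no_power_root_of_finite_unary_language {α : Type*} (a : α) (M : Language α)
    (hM : ∀ w ∈ M, ∀ c ∈ w, c = a)
    (hfin : M.Finite) (hne : M.Nonempty) (hneq : M ≠ {[]})
    (n : ℕ) (hn : ∀ w ∈ M, w.length < n) :
    ¬ ∃ L : Language α, (∀ w ∈ L, ∀ c ∈ w, c = a) ∧ L ^ n = M := by
  rintro ⟨L, -, hL⟩
  exact no_power_root_of_finite_unary_language_general hne hneq hn ⟨L, hL⟩
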